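/- Under the stated conditions, assume additionally that log(p/p₀) is P₀-integrable and set m := ∫ log(p/p₀) dP₀. Then for every real k ≥ 2 one has ∫ |log(p/p₀) − m|^k dP₀ ≤ 2^{2k−1} Γ(k+1) (2 + M) · h(p,p₀)², where Γ denotes the Gamma function. -/

import Mathlib

open MeasureTheory Real ENNReal


lemma aux_gamma (n : ℕ) (hn : 2 ≤ n) (θ x : ℝ) (h0 : 0 ≤ θ) (h1 : θ < 1) (hx : 0 < x) :
    x ^ ((n : ℝ) + θ) ≤ Real.Gamma ((n : ℝ) + θ + 1) * (Real.exp x - 1 - x) := by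
  have hGpos : 0 < Real.Gamma ((n : ℝ) + θ + 1) := Real.Gamma_pos_of_pos (by positivity)
  -- exp bound
  have hexp : x ^ n / (n.factorial : ℝ) + x ^ (n + 1) / ((n + 1).factorial : ℝ)
      ≤ Real.exp x - 1 - x := by
    have h := Real.sum_le_exp_of_nonneg hx.le (n + 2)
    rw [Finset.sum_range_succ, Finset.sum_range_succ] at h
    have h2 : (1 : ℝ) + x ≤ ∑ i ∈ Finset.range n, x ^ i / (i.factorial : ℝ) := by
      have : ∑ i ∈ Finset.range 2, x ^ i / (i.factorial : ℝ) ≤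
          ∑ i ∈ Finset.range n, x ^ i / (i.factorial : ℝ) := by
        apply Finset.sum_le_sum_of_subset_of_nonneg
        · exact Finset.range_mono hn
        · intros; positivity
      simpa [Finset.sum_range_succ] using this
    linarith
  -- Gamma bound
  have hG : ((n : ℝ) + 1) * (n.factorial : ℝ) ≤
      Real.Gamma ((n : ℝ) + θ + 1) * ((n : ℝ) + 1 + θ) ^ (1 - θ) := by
    rcases h0.eq_or_lt with h | h0'
    · subst h
      have : Real.Gamma ((n : ℝ) + 0 + 1) = n.factorial := by
        rw [add_zero]; exact Real.Gamma_nat_eq_factorial n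
      rw [this]; simp; nlinarith
    · have hh := Real.Gamma_mul_add_mul_le_rpow_Gamma_mul_rpow_Gamma
        (s := (n : ℝ) + θ + 1) (t := (n : ℝ) + θ + 1 + 1) (a := θ) (b := 1 - θ)
        (by positivity) (by positivity) h0' (by linarith) (by ring)
      have e1 : θ * ((n : ℝ) + θ + 1) + (1 - θ) * ((n : ℝ) + θ + 1 + 1) = ((n + 1 : ℕ) : ℝ) + 1 := by
        push_cast; ring
      rw [e1, Real.Gamma_nat_eq_factorial, Real.Gamma_add_one (s := (n : ℝ) + θ + 1) (by positivity),
        Real.mul_rpow (by positivity) hGpos.le] at hh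
      have e2 : Real.Gamma ((n : ℝ) + θ + 1) ^ θ * Real.Gamma ((n : ℝ) + θ + 1) ^ (1 - θ)
          = Real.Gamma ((n : ℝ) + θ + 1) := by
        rw [← Real.rpow_add hGpos]; simp
      rw [Nat.factorial_succ] at hh
      push_cast at hh
      calc _ ≤ _ := hh
        _ = (Real.Gamma ((n : ℝ) + θ + 1) ^ θ * Real.Gamma ((n : ℝ) + θ + 1) ^ (1 - θ)) *
            ((n : ℝ) + θ + 1) ^ (1 - θ) := by ring
        _ = _ := by rw [e2]; congr 2; ring
  have hamgm : x ^ θ * ((n : ℝ) + 1 + θ) ^ (1 - θ) ≤ x + n + 1 := by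
    have := Real.geom_mean_le_arith_mean2_weighted (w₁ := θ) (w₂ := 1 - θ) (p₁ := x)
      (p₂ := (n : ℝ) + 1 + θ) h0 (by linarith) hx.le (by positivity) (by ring)
    have hnn : (0 : ℝ) ≤ n := by positivity
    nlinarith [mul_nonneg h0 hnn]
  set G := Real.Gamma ((n : ℝ) + θ + 1)
  set Y := ((n : ℝ) + 1 + θ) ^ (1 - θ)
  have hfac : (0 : ℝ) < n.factorial := by positivity
  have key : x ^ θ * (((n : ℝ) + 1) * n.factorial) ≤ G * (x + n + 1) := by
    calc _ ≤ x ^ θ * (G * Y) := by gcongr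
      _ = G * (x ^ θ * Y) := by ring
      _ ≤ _ := by gcongr
  calc x ^ ((n : ℝ) + θ) = x ^ n * x ^ θ := by
        rw [Real.rpow_add hx, Real.rpow_natCast]
    _ ≤ x ^ n * (G * (x + n + 1) / (((n : ℝ) + 1) * n.factorial)) := by
        gcongr
        rw [le_div_iff₀ (by positivity)]
        exact key
    _ = G * (x ^ n / (n.factorial : ℝ) + x ^ (n + 1) / ((n + 1).factorial : ℝ)) := by
        rw [Nat.factorial_succ]; push_cast; field_simp; ring
    _ ≤ _ := by gcongr

lemma aux_pow (k x : ℝ) (hk : 2 ≤ k) (hx : 0 ≤ x) :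
    x ^ k ≤ Real.Gamma (k + 1) * (Real.exp x - 1 - x) := by
  rcases hx.eq_or_lt with h | hx
  · subst h; rw [Real.zero_rpow (by linarith)]; simp
  have h := aux_gamma ⌊k⌋₊ (Nat.le_floor (by simpa using hk)) (k - ⌊k⌋₊) x
    (by linarith [Nat.floor_le (show 0 ≤ k by linarith)])
    (by linarith [Nat.lt_floor_add_one k]) hx
  have e : ((⌊k⌋₊ : ℝ) + (k - ⌊k⌋₊)) = k := by ring
  rwa [e] at h

/-- Bernstein integrand at `log r`. -/
noncomputable def bern (r : ℝ) : ℝ := Real.exp |Real.log r| - 1 - |Real.log r|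

lemma aux_log (u : ℝ) (h0 : 0 ≤ u) (h1 : u ≤ 1 / 2) :
    u - Real.log (1 + u) ≤ (1 - (1 + u)⁻¹) ^ 2 := by
  have h := Real.le_log_one_add_of_nonneg h0
  have e : (1 - (1 + u)⁻¹) ^ 2 = u ^ 2 / (1 + u) ^ 2 := by field_simp; ring
  rw [e]
  calc _ ≤ u - 2 * u / (u + 2) := by linarith
    _ = u ^ 2 / (u + 2) := by field_simp; ring
    _ ≤ _ := by gcongr; nlinarith

lemma bern_inv (r : ℝ) (hr : 0 < r) (h : 1 ≤ r⁻¹) : bern r = r⁻¹ - 1 - Real.log r⁻¹ := by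
  have : |Real.log r| = Real.log r⁻¹ := by
    rw [Real.log_inv, abs_of_nonpos]
    exact Real.log_nonpos hr.le ((one_le_inv₀ hr).1 h)
  rw [bern, this, Real.exp_log (by positivity)]

lemma bern_near (r : ℝ) (hr : 0 < r) (h : r⁻¹ ≤ 3 / 2) : bern r ≤ (r - 1) ^ 2 := by
  rcases le_total 1 r with h1 | h1
  · have h2 := Real.le_log_one_add_of_nonneg (x := r - 1) (by linarith)
    rw [bern, abs_of_nonneg (Real.log_nonneg h1), Real.exp_log hr]
    have e : 1 + (r - 1) = r := by ring
    rw [e] at h2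
    have : r - 1 - 2 * (r - 1) / (r - 1 + 2) = (r - 1) ^ 2 / (r + 1) := by
      have : r - 1 + 2 = r + 1 := by ring
      rw [this]; field_simp; ring
    have h3 : (r - 1) ^ 2 / (r + 1) ≤ (r - 1) ^ 2 := div_le_self (by positivity) (by linarith)
    linarith
  · have h2 : 1 ≤ r⁻¹ := (one_le_inv₀ hr).2 h1
    rw [bern_inv r hr h2]
    have := aux_log (r⁻¹ - 1) (by linarith) (by linarith)
    have e : 1 + (r⁻¹ - 1) = r⁻¹ := by ring
    rw [e, inv_inv] at this
    nlinarith

lemma bern_far (r δ l : ℝ) (hr : 0 < r) (h0 : 0 ≤ δ) (h1 : δ ≤ 1 / 2) (h : 1 + δ ≤ r⁻¹)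
    (hl : 0 < l) :
    2 * bern r ≤ 2 * (r - 1) ^ 2 + l * (r⁻¹ ^ 2) + l⁻¹ * (r - 1) ^ 2 - 2 * δ := by
  rw [bern_inv r hr (by linarith)]
  have h2 := aux_log δ h0 h1
  have h3 : Real.log (1 + δ) ≤ Real.log r⁻¹ := Real.log_le_log (by linarith) h
  have hr' : r ≤ (1 + δ)⁻¹ := (le_inv_comm₀ (by linarith) hr).1 h
  have h5 : (1 + δ)⁻¹ ≤ 1 := inv_le_one_of_one_le₀ (by linarith)
  have h4 : (1 - (1 + δ)⁻¹) ^ 2 ≤ (r - 1) ^ 2 := by nlinarith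
  have h6 : 2 * (r⁻¹ - 1) ≤ l * (r⁻¹ ^ 2) + l⁻¹ * (r - 1) ^ 2 := by
    have : l * (r⁻¹ ^ 2) + l⁻¹ * (r - 1) ^ 2 - 2 * (r⁻¹ - 1) = l⁻¹ * (l * r⁻¹ - (1 - r)) ^ 2 := by
      field_simp; ring
    have : 0 ≤ l⁻¹ * (l * r⁻¹ - (1 - r)) ^ 2 := by positivity
    linarith
  linarith

/-- Abstract integral bound for the Bernstein integrand. -/
lemma bern_integral {X : Type*} [MeasurableSpace X] (P : Measure X) [IsProbabilityMeasure P]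
    (r : X → ℝ) (hr : Measurable r) (hpos : ∀ᵐ x ∂P, 0 < r x)
    (hW : Integrable (fun x => (r x - 1) ^ 2) P)
    (hS : Integrable (fun x => (r x)⁻¹ ^ 2) P) (M c : ℝ) (hM : 0 ≤ M) (hc : 1 ≤ c)
    (A : Set X) (hA : MeasurableSet A)
    (hAin : ∀ᵐ x ∂P, x ∈ A → 1 + 1 / (2 * c) ≤ (r x)⁻¹)
    (hAout : ∀ᵐ x ∂P, x ∉ A → (r x)⁻¹ ≤ 3 / 2)
    (h : P A = 0 ∨ c * ∫ x in A, (r x)⁻¹ ^ 2 ∂P ≤ M * P.real A) :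
    Integrable (fun x => bern (r x)) P ∧
      2 * ∫ x, bern (r x) ∂P ≤ (2 + M) * ∫ x, (r x - 1) ^ 2 ∂P := by
  have hbm : Measurable (fun x => bern (r x)) := by
    unfold bern; fun_prop
  have hb0 : ∀ x, 0 ≤ bern (r x) := fun x => by
    unfold bern; linarith [Real.add_one_le_exp |Real.log (r x)|]
  have hWnn : 0 ≤ ∫ x, (r x - 1) ^ 2 ∂P := integral_nonneg fun x => by positivity
  have hδ0 : 0 < 1 / (2 * c) := by positivity
  have hδ1 : 1 / (2 * c) ≤ 1 / 2 := by
    apply one_div_le_one_div_of_le <;> linarith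
  by_cases hPA : P A = 0
  · have hnot : ∀ᵐ x ∂P, x ∉ A := measure_eq_zero_iff_ae_notMem.1 hPA
    have hle : ∀ᵐ x ∂P, bern (r x) ≤ (r x - 1) ^ 2 := by
      filter_upwards [hnot, hAout, hpos] with x h1 h2 h3 using bern_near _ h3 (h2 h1)
    have hi : Integrable (fun x => bern (r x)) P := by
      refine hW.mono' hbm.aestronglyMeasurable ?_
      filter_upwards [hle] with x hx
      rwa [Real.norm_of_nonneg (hb0 x)]
    refine ⟨hi, ?_⟩
    have := integral_mono_ae hi hW hle
    nlinarith
  · have h := h.resolve_left hPA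
    have ha : 0 < P.real A := by
      rw [measureReal_def]; exact ENNReal.toReal_pos hPA (measure_ne_top _ _)
    set a := P.real A with ha_def
    set J := ∫ x in A, (r x - 1) ^ 2 ∂P with hJ
    set S := ∫ x in A, (r x)⁻¹ ^ 2 ∂P with hS'
    have hJpos : 0 < J := by
      rw [hJ, setIntegral_pos_iff_support_of_nonneg_ae
        (Filter.Eventually.of_forall fun x => by positivity) hW.integrableOn]
      have : P A ≤ P (Function.support (fun x => (r x - 1) ^ 2) ∩ A) := by
        apply measure_mono_ae
        filter_upwards [hAin, hpos] with x h1 h2 hx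
        refine ⟨?_, hx⟩
        have h3 := h1 hx
        rw [Function.mem_support]
        intro h4
        have h5 : r x = 1 := by
          have := pow_eq_zero_iff (two_ne_zero) |>.1 h4
          linarith
        rw [h5, inv_one] at h3
        linarith
      exact lt_of_lt_of_le (pos_iff_ne_zero.2 hPA) this
    set l := c * (J / a) with hl_def
    have hl : 0 < l := by positivity
    set D : X → ℝ := fun x => 2 * (r x - 1) ^ 2 +
      A.indicator (fun x => l * ((r x)⁻¹ ^ 2) + l⁻¹ * (r x - 1) ^ 2 - 2 * (1 / (2 * c))) x with hD
    have hin : Integrable (fun x => l * ((r x)⁻¹ ^ 2) + l⁻¹ * (r x - 1) ^ 2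
        - 2 * (1 / (2 * c))) P :=
      ((hS.const_mul l).add (hW.const_mul l⁻¹)).sub (integrable_const _)
    have hDi : Integrable D P := (hW.const_mul 2).add (hin.indicator hA)
    have hle : ∀ᵐ x ∂P, 2 * bern (r x) ≤ D x := by
      filter_upwards [hAin, hAout, hpos] with x h1 h2 h3
      by_cases hx : x ∈ A
      · have := bern_far (r x) _ l h3 hδ0.le hδ1 (h1 hx) hl
        simp only [hD, Set.indicator_of_mem hx]
        linarith
      · have := bern_near (r x) h3 (h2 hx)
        simp only [hD, Set.indicator_of_notMem hx]
        linarith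
    have hi2 : Integrable (fun x => 2 * bern (r x)) P := by
      refine hDi.mono' (hbm.const_mul 2).aestronglyMeasurable ?_
      filter_upwards [hle] with x hx
      rwa [Real.norm_of_nonneg (by linarith [hb0 x])]
    have hi : Integrable (fun x => bern (r x)) P := by
      simpa using hi2.const_mul (1 / 2)
    refine ⟨hi, ?_⟩
    have h1 := integral_mono_ae hi2 hDi hle
    rw [integral_const_mul] at h1
    have h2 : ∫ x, D x ∂P = 2 * ∫ x, (r x - 1) ^ 2 ∂P + (l * S + l⁻¹ * J - a * (2 * (1 / (2 * c)))) := by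
      rw [hD, integral_add (hW.const_mul 2) (hin.indicator hA), integral_const_mul,
        integral_indicator hA, integral_sub, integral_add, integral_const_mul, integral_const_mul]
      · simp [ha_def, hS', hJ]
      · exact (hS.const_mul l).integrableOn
      · exact (hW.const_mul _).integrableOn
      · exact ((hS.const_mul l).add (hW.const_mul l⁻¹)).integrableOn
      · exact integrable_const _
    have h3 : l⁻¹ * J = a * (2 * (1 / (2 * c))) := by
      rw [hl_def]; field_simp
    have h4 : l * S ≤ M * J := by
      calc l * S = (J / a) * (c * S) := by rw [hl_def]; ring
        _ ≤ (J / a) * (M * a) := by gcongr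
        _ = M * J := by field_simp
    have h5 : J ≤ ∫ x, (r x - 1) ^ 2 ∂P :=
      setIntegral_le_integral hW (Filter.Eventually.of_forall fun x => by positivity)
    have h6 : M * J ≤ M * ∫ x, (r x - 1) ^ 2 ∂P := by gcongr
    linarith

/-- Centering. -/
lemma center_bound {X : Type*} [MeasurableSpace X] (P : Measure X) [IsProbabilityMeasure P]
    (f : X → ℝ) (hf : Integrable f P) (k : ℝ) (hk : 1 ≤ k)
    (hfk : Integrable (fun x => |f x| ^ k) P) :
    ∫⁻ x, ENNReal.ofReal (|f x - ∫ y, f y ∂P| ^ k) ∂P ≤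
      ENNReal.ofReal (2 ^ k * ∫ x, |f x| ^ k ∂P) := by
  set m := ∫ y, f y ∂P with hm
  have hk0 : 0 ≤ k := by linarith
  have hmk : |m| ^ k ≤ ∫ x, |f x| ^ k ∂P := by
    calc |m| ^ k ≤ (∫ x, |f x| ∂P) ^ k := by
          gcongr; exact abs_integral_le_integral_abs
      _ ≤ _ := by
          refine ConvexOn.map_integral_le (f := fun x => |f x|) (convexOn_rpow hk) ?_ isClosed_Ici ?_ hf.abs hfk
          · exact (Real.continuous_rpow_const hk0).continuousOn
          · exact Filter.Eventually.of_forall fun x => Set.mem_Ici.2 (abs_nonneg _)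
  have hpt : ∀ x, |f x - m| ^ k ≤ 2 ^ (k - 1) * (|f x| ^ k + |m| ^ k) := by
    intro x
    calc |f x - m| ^ k ≤ (|f x| + |m|) ^ k := by gcongr; exact abs_sub _ _
      _ ≤ _ := by
        have := NNReal.rpow_add_le_mul_rpow_add_rpow ‖f x‖₊ ‖m‖₊ hk
        have h2 := NNReal.coe_le_coe.2 this
        push_cast at h2
        simpa using h2
  have hi : Integrable (fun x => 2 ^ (k - 1) * (|f x| ^ k + |m| ^ k)) P :=
    (hfk.add (integrable_const _)).const_mul _
  calc _ ≤ ∫⁻ x, ENNReal.ofReal (2 ^ (k - 1) * (|f x| ^ k + |m| ^ k)) ∂P :=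
        lintegral_mono fun x => ENNReal.ofReal_le_ofReal (hpt x)
    _ = ENNReal.ofReal (∫ x, 2 ^ (k - 1) * (|f x| ^ k + |m| ^ k) ∂P) :=
        (ofReal_integral_eq_lintegral_ofReal hi
          (Filter.Eventually.of_forall fun x => by positivity)).symm
    _ ≤ _ := by
        apply ENNReal.ofReal_le_ofReal
        rw [integral_const_mul, integral_add hfk (integrable_const _)]
        have e : (2 : ℝ) ^ k = 2 ^ (k - 1) * 2 := by
          rw [← Real.rpow_add_one (by norm_num)]; congr 1; ring
        rw [e, mul_assoc]
        gcongr
        simp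
        linarith

/-- Under the stated conditions, with `m := ∫ log(p/p₀) dP₀`, for every real `k ≥ 2`,
`∫ |log(p/p₀) - m|^k dP₀ ≤ 2^{2k-1} Γ(k+1) (2 + M) h(p,p₀)²`. -/
theorem lintegral_abs_centered_log_ratio_rpow_le_hellinger
    {X : Type*} [MeasurableSpace X] (μ : Measure X) [SigmaFinite μ]
    (p p₀ : X → ℝ) (hp : Measurable p) (hp₀ : Measurable p₀)
    (hpnn : ∀ x, 0 ≤ p x) (hp₀nn : ∀ x, 0 ≤ p₀ x)
    (hpden : ∫⁻ x, ENNReal.ofReal (p x) ∂μ = 1)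
    (hp₀den : ∫⁻ x, ENNReal.ofReal (p₀ x) ∂μ = 1)
    (P₀ : Measure X) (hP₀ : P₀ = μ.withDensity fun x => ENNReal.ofReal (p₀ x))
    (hzero : P₀ {x | p x = 0} = 0)
    (hfin : ∫⁻ x, ENNReal.ofReal (p₀ x / p x) ∂P₀ < ⊤)
    (M : ℝ) (hM : 0 ≤ M)
    (hMbound : ∃ c : ℝ, 1 ≤ c ∧
      (P₀ {x | (1 + 1 / (2 * c)) ^ 2 ≤ p₀ x / p x} = 0 ∨
        ENNReal.ofReal c *
            (∫⁻ x in {x | (1 + 1 / (2 * c)) ^ 2 ≤ p₀ x / p x},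
              ENNReal.ofReal (p₀ x / p x) ∂P₀) ≤
          ENNReal.ofReal M * P₀ {x | (1 + 1 / (2 * c)) ^ 2 ≤ p₀ x / p x}))
    (hint : Integrable (fun x => Real.log (p x / p₀ x)) P₀)
    (m : ℝ) (hm : m = ∫ x, Real.log (p x / p₀ x) ∂P₀)
    (k : ℝ) (hk : 2 ≤ k) :
    ∫⁻ x, ENNReal.ofReal (|Real.log (p x / p₀ x) - m| ^ k) ∂P₀ ≤
      ENNReal.ofReal ((2 : ℝ) ^ (2 * k - 1) * Real.Gamma (k + 1) * (2 + M)) *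
        ∫⁻ x, ENNReal.ofReal ((Real.sqrt (p x) - Real.sqrt (p₀ x)) ^ 2) ∂μ := by
  obtain ⟨c, hc, hcM⟩ := hMbound
  have hprob : IsProbabilityMeasure P₀ := by
    constructor
    rw [hP₀, withDensity_apply _ MeasurableSet.univ]
    simpa using hp₀den
  have hm0 : Measurable fun x => ENNReal.ofReal (p₀ x) := hp₀.ennreal_ofReal
  have hppos : ∀ᵐ x ∂P₀, 0 < p x := by
    have : ∀ᵐ x ∂P₀, ¬ (p x = 0) := measure_eq_zero_iff_ae_notMem.1 hzero
    filter_upwards [this] with x hx using lt_of_le_of_ne (hpnn x) (Ne.symm hx)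
  have hp0pos : ∀ᵐ x ∂P₀, 0 < p₀ x := by
    rw [hP₀, ae_withDensity_iff hm0]
    refine Filter.Eventually.of_forall fun x hx => ?_
    by_contra hcon
    exact hx (ENNReal.ofReal_eq_zero.2 (not_lt.1 hcon))
  set r : X → ℝ := fun x => Real.sqrt (p x / p₀ x) with hr_def
  have hr : Measurable r := (hp.div hp₀).sqrt
  have hrpos : ∀ᵐ x ∂P₀, 0 < r x := by
    filter_upwards [hppos, hp0pos] with x h1 h2
    exact Real.sqrt_pos.2 (div_pos h1 h2)
  have hrinv : ∀ x, (r x)⁻¹ ^ 2 = p₀ x / p x := by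
    intro x
    simp only [hr_def]
    rw [inv_pow, Real.sq_sqrt (div_nonneg (hpnn x) (hp₀nn x)), inv_div]
  set H := ∫⁻ x, ENNReal.ofReal ((Real.sqrt (p x) - Real.sqrt (p₀ x)) ^ 2) ∂μ with hH
  have hHfin : H ≠ ⊤ := by
    have : H ≤ ∫⁻ x, (ENNReal.ofReal (p x) + ENNReal.ofReal (p₀ x)) ∂μ := by
      apply lintegral_mono
      intro x
      dsimp only
      rw [← ENNReal.ofReal_add (hpnn x) (hp₀nn x)]
      apply ENNReal.ofReal_le_ofReal
      nlinarith [Real.sq_sqrt (hpnn x), Real.sq_sqrt (hp₀nn x),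
        mul_nonneg (Real.sqrt_nonneg (p x)) (Real.sqrt_nonneg (p₀ x))]
    rw [lintegral_add_left hp.ennreal_ofReal, hpden, hp₀den] at this
    exact ne_top_of_le_ne_top (by norm_num) this
  have hWle : ∫⁻ x, ENNReal.ofReal ((r x - 1) ^ 2) ∂P₀ ≤ H := by
    rw [hP₀, lintegral_withDensity_eq_lintegral_mul _ hm0
      ((hr.sub_const 1).pow_const 2).ennreal_ofReal]
    apply lintegral_mono
    intro x
    simp only [Pi.mul_apply]
    rw [← ENNReal.ofReal_mul (hp₀nn x)]
    apply ENNReal.ofReal_le_ofReal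
    rcases (hp₀nn x).eq_or_lt with h | h
    · rw [← h]; simp
    · have h1 : Real.sqrt (p₀ x) * r x = Real.sqrt (p x) := by
        simp only [hr_def]
        rw [← Real.sqrt_mul h.le]; congr 1; field_simp
      have h2 := Real.sq_sqrt h.le
      rw [← h1]
      nth_rewrite 1 [← h2]
      apply le_of_eq; ring
  have hW : Integrable (fun x => (r x - 1) ^ 2) P₀ := by
    refine ⟨((hr.sub_const 1).pow_const 2).aestronglyMeasurable, ?_⟩
    rw [hasFiniteIntegral_iff_ofReal (Filter.Eventually.of_forall fun x => by positivity)]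
    exact lt_of_le_of_lt hWle (lt_top_iff_ne_top.2 hHfin)
  have hS : Integrable (fun x => (r x)⁻¹ ^ 2) P₀ := by
    refine ⟨(hr.inv.pow_const 2).aestronglyMeasurable, ?_⟩
    rw [hasFiniteIntegral_iff_ofReal (Filter.Eventually.of_forall fun x => by positivity)]
    simpa only [hrinv] using hfin
  set A : Set X := {x | (1 + 1 / (2 * c)) ^ 2 ≤ p₀ x / p x} with hAdef
  have hA : MeasurableSet A := measurableSet_le measurable_const (hp₀.div hp)
  have hc0 : 0 < c := by linarith
  have hδ1 : 1 / (2 * c) ≤ 1 / 2 := by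
    apply one_div_le_one_div_of_le <;> linarith
  have hδ0 : 0 < 1 / (2 * c) := by positivity
  have hrn : ∀ x, 0 ≤ (r x)⁻¹ := fun x => inv_nonneg.2 (Real.sqrt_nonneg _)
  obtain ⟨hbi, hb⟩ := bern_integral P₀ r hr hrpos hW hS M c hM hc A hA
    (Filter.Eventually.of_forall fun x hx => by
      have hx' : (1 + 1 / (2 * c)) ^ 2 ≤ (r x)⁻¹ ^ 2 := by rw [hrinv]; exact hx
      exact abs_le_of_sq_le_sq' hx' (hrn x) |>.2)
    (Filter.Eventually.of_forall fun x hx => by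
      have hx' : (r x)⁻¹ ^ 2 ≤ (1 + 1 / (2 * c)) ^ 2 := by
        rw [hrinv]; exact (not_le.1 hx).le
      have := abs_le_of_sq_le_sq' hx' (by positivity) |>.2
      linarith)
    (by
      refine hcM.imp id fun h => ?_
      have e : ∫⁻ x in A, ENNReal.ofReal (p₀ x / p x) ∂P₀
          = ENNReal.ofReal (∫ x in A, (r x)⁻¹ ^ 2 ∂P₀) := by
        rw [ofReal_integral_eq_lintegral_ofReal hS.integrableOn
          (Filter.Eventually.of_forall fun x => by positivity)]
        simp only [hrinv]
      rw [e, ← ENNReal.ofReal_mul hc0.le, ← ofReal_measureReal (μ := P₀) (s := A),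
        ← ENNReal.ofReal_mul hM] at h
      exact (ENNReal.ofReal_le_ofReal_iff (by positivity)).1 h)
  -- moments
  have hGpos : 0 < Real.Gamma (k + 1) := Real.Gamma_pos_of_pos (by linarith)
  have hpt : ∀ x, |Real.log (p x / p₀ x)| ^ k ≤ 2 ^ k * Real.Gamma (k + 1) * bern (r x) := by
    intro x
    have h1 : Real.log (r x) = Real.log (p x / p₀ x) / 2 :=
      Real.log_sqrt (div_nonneg (hpnn x) (hp₀nn x))
    have h2 : |Real.log (p x / p₀ x)| = 2 * |Real.log (r x)| := by
      rw [h1, abs_div]; norm_num; ring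
    rw [h2, Real.mul_rpow (by norm_num) (abs_nonneg _), mul_assoc]
    gcongr
    exact aux_pow k _ hk (abs_nonneg _)
  have hfk : Integrable (fun x => |Real.log (p x / p₀ x)| ^ k) P₀ := by
    refine (hbi.const_mul (2 ^ k * Real.Gamma (k + 1))).mono' ?_ ?_
    · exact ((Real.measurable_log.comp (hp.div hp₀)).abs.pow_const k).aestronglyMeasurable
    · refine Filter.Eventually.of_forall fun x => ?_
      rw [Real.norm_of_nonneg (by positivity)]
      exact hpt x
  have hmom : ∫ x, |Real.log (p x / p₀ x)| ^ k ∂P₀ ≤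
      2 ^ k * Real.Gamma (k + 1) * ∫ x, bern (r x) ∂P₀ := by
    rw [← integral_const_mul]
    exact integral_mono hfk (hbi.const_mul _) hpt
  rw [hm]
  refine (center_bound P₀ _ hint k (by linarith) hfk).trans ?_
  have hWH : ENNReal.ofReal (∫ x, (r x - 1) ^ 2 ∂P₀) ≤ H := by
    rw [ofReal_integral_eq_lintegral_ofReal hW
      (Filter.Eventually.of_forall fun x => by positivity)]
    exact hWle
  have hWnn : 0 ≤ ∫ x, (r x - 1) ^ 2 ∂P₀ := integral_nonneg fun x => by positivity
  calc _ ≤ ENNReal.ofReal ((2 : ℝ) ^ (2 * k - 1) * Real.Gamma (k + 1) * (2 + M) *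
        ∫ x, (r x - 1) ^ 2 ∂P₀) := by
        apply ENNReal.ofReal_le_ofReal
        have e : (2 : ℝ) ^ k * 2 ^ k = 2 ^ (2 * k - 1) * 2 := by
          rw [← Real.rpow_add_one (by norm_num), ← Real.rpow_add (by norm_num)]; congr 1; ring
        calc (2 : ℝ) ^ k * ∫ x, |Real.log (p x / p₀ x)| ^ k ∂P₀
            ≤ 2 ^ k * (2 ^ k * Real.Gamma (k + 1) * ∫ x, bern (r x) ∂P₀) := by gcongr
          _ = (2 ^ k * 2 ^ k) * Real.Gamma (k + 1) * ∫ x, bern (r x) ∂P₀ := by ring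
          _ = 2 ^ (2 * k - 1) * Real.Gamma (k + 1) * (2 * ∫ x, bern (r x) ∂P₀) := by
            rw [e]; ring
          _ ≤ 2 ^ (2 * k - 1) * Real.Gamma (k + 1) * ((2 + M) * ∫ x, (r x - 1) ^ 2 ∂P₀) := by
            gcongr
          _ = _ := by ring
    _ = ENNReal.ofReal ((2 : ℝ) ^ (2 * k - 1) * Real.Gamma (k + 1) * (2 + M)) *
        ENNReal.ofReal (∫ x, (r x - 1) ^ 2 ∂P₀) := by
        rw [ENNReal.ofReal_mul (by positivity)]
    _ ≤ _ := by gcongr
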